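/- Suppose a_i b_j ∉ q^{−ℕ} for all 1 ≤ i, j ≤ n+1. Then Σ_{i=1}^{n+1} (−1)^{i−1} J(â_i) = (1−q)ⁿ (q)_∞ⁿ (a_1⋯a_{n+1} b_1⋯b_{n+1})_∞ / ∏_{i=1}^{n+1} ∏_{j=1}^{n+1} (a_i b_j)_∞ · ∏_{1≤i<j≤n+1} a_j θ(a_i/a_j), where â_i := (a_1,…,a_{i−1},a_{i+1},…,a_{n+1}). (Evans's q-Dixon–Anderson summation; Corollary 4.2 of the paper.) -/

import Mathlib

/-!
The Vandermonde factor in the summand is a determinant, so each `J(âᵢ)` is an `n × n` minor of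
one-variable moments `mₖᵣ = ∑_{ν ≥ 0} x^{r+1} w(x)`, `x = aₖ q^ν`, with the weight
`w(x) = ∏ⱼ (q x / aⱼ)_∞ / (bⱼ x)_∞`. Up to `(1 - q)ⁿ`, the alternating sum is then the Laplace
expansion of the determinant `F(b)` of the matrix with rows `(1, mₖ₀, …, mₖ,ₙ₋₁)`
(`alternating_sum_eq_det`).

Telescoping `∏ⱼ (x / aⱼ)_∞ / (bⱼ x)_∞` along `x = aₖ q^ν` expresses the constant column through
the moments of order `0, …, n`, with the coefficients of `∏ⱼ (1 - x / aⱼ) - ∏ⱼ (1 - bⱼ x)`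
(`sum_coeff_mul_moment`). Hence both `F(b)` and `F(…, q bⱼ, …)` are explicit multiples of
`det (mₖᵣ)_{0 ≤ r ≤ n}`, and with `A = ∏ aᵢ`, `B = ∏ bᵢ` comparison gives the q-difference equation
`F(b) ∏ᵢ (1 - aᵢ bⱼ) = (1 - A B) F(…, q bⱼ, …)` (`det_bordered_step`). Iterating it and letting
`q^N bⱼ → 0` for every `j` yields `F(b) ∏ᵢⱼ (aᵢ bⱼ)_∞ = (A B)_∞ F(0)`
(`det_bordered_eq_zero_params`).

To find `F(0)`, take `bⱼ = q / aⱼ`: the weight is `1`, the moments are geometric series, and `F` is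
a Vandermonde determinant (`det_bordered_zero`). This choice is admissible unless
`aᵢ = aⱼ q^m` for some `i ≠ j`, `m ≥ 0`; in that case two rows of the matrix agree and a theta factor
vanishes, so both sides are zero.
-/

open scoped BigOperators
open Finset

/-- The infinite q-Pochhammer symbol `(a)_∞ = ∏_{i=0}^∞ (1 - qⁱ a)`. -/
noncomputable def qp (q a : ℂ) : ℂ := ∏' i : ℕ, (1 - q ^ i * a)

/-- The theta function `θ(a) = (a)_∞ (q/a)_∞`. -/
noncomputable def th (q a : ℂ) : ℂ := qp q a * qp q (q / a)

/-- Summand of the Jackson integral of Dixon–Anderson type. -/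
noncomputable def daTerm {n : ℕ} (q : ℂ) (a b : Fin (n + 1) → ℂ) (x : Fin n → ℂ)
    (ν : Fin n → ℤ) : ℂ :=
  (∏ i, (x i * q ^ ν i *
      ∏ j, qp q (q * (a j)⁻¹ * (x i * q ^ ν i)) / qp q (b j * (x i * q ^ ν i)))) *
    ∏ i, ∏ j ∈ Finset.Ioi i, (x j * q ^ ν j - x i * q ^ ν i)

/-- The Jackson integral of Dixon–Anderson type `J(x)`. -/
noncomputable def daSum {n : ℕ} (q : ℂ) (a b : Fin (n + 1) → ℂ) (x : Fin n → ℂ) : ℂ :=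
  (1 - q) ^ n * ∑' ν : Fin n → ℤ, daTerm q a b x ν

open Filter Topology

/-! ### Sums of products over `Fin n → ℤ` -/

lemma summable_and_tsum_pi_prod (n : ℕ) (f : Fin n → ℤ → ℂ)
    (hf : ∀ i, Summable fun m => ‖f i m‖) :
    (Summable fun ν : Fin n → ℤ => ‖∏ i, f i (ν i)‖) ∧
      ∑' ν : Fin n → ℤ, ∏ i, f i (ν i) = ∏ i, ∑' m, f i m := by
  induction n with
  | zero =>
    refine ⟨(hasSum_fintype _).summable, ?_⟩
    simp
  | succ n ih =>
    obtain ⟨h1, h2⟩ := ih (fun i => f i.succ) (fun i => hf i.succ)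
    have hs : Summable fun p : ℤ × (Fin n → ℤ) =>
        ‖f 0 p.1 * ∏ i, f (Fin.succ i) (p.2 i)‖ :=
      Summable.mul_norm (f := f 0) (g := fun ν : Fin n → ℤ => ∏ i, f (Fin.succ i) (ν i)) (hf 0) h1
    constructor
    · rw [← (Fin.consEquiv (fun _ : Fin (n + 1) => ℤ)).summable_iff]
      refine hs.congr fun p => ?_
      simp [Fin.prod_univ_succ, Fin.consEquiv]
    · rw [← (Fin.consEquiv (fun _ : Fin (n + 1) => ℤ)).tsum_eq, Fin.prod_univ_succ, ← h2,
        tsum_mul_tsum_of_summable_norm (f := f 0)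
          (g := fun ν : Fin n → ℤ => ∏ i, f (Fin.succ i) (ν i)) (hf 0) h1]
      refine tsum_congr fun p => ?_
      simp [Fin.prod_univ_succ, Fin.consEquiv]

/-! ### The infinite q-Pochhammer symbol -/

section Pochhammer

variable {q : ℂ} (hq : ‖q‖ < 1)
include hq

lemma summable_norm_qpow_mul (a : ℂ) : Summable fun i : ℕ => ‖-(q ^ i * a)‖ := by
  simp only [norm_neg, norm_mul, norm_pow]
  exact (summable_geometric_of_lt_one (norm_nonneg _) hq).mul_right _

lemma multipliable_qp (a : ℂ) : Multipliable fun i : ℕ => 1 - q ^ i * a := by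
  simpa [sub_eq_add_neg] using multipliable_one_add_of_summable (summable_norm_qpow_mul hq a)

lemma qp_step (a : ℂ) : qp q a = (1 - a) * qp q (q * a) := by
  unfold qp
  rw [tprod_eq_zero_mul']
  · simp [pow_succ, mul_assoc]
  · simpa [pow_succ, mul_assoc] using multipliable_qp hq (q * a)

lemma qp_ne_zero {a : ℂ} (h : ∀ m : ℕ, q ^ m * a ≠ 1) : qp q a ≠ 0 := by
  have := tprod_one_add_ne_zero_of_summable (f := fun i : ℕ => -(q ^ i * a))
    (fun i => by
      rw [← sub_eq_add_neg]
      exact sub_ne_zero.2 (h i).symm) (summable_norm_qpow_mul hq a)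
  simpa [qp, sub_eq_add_neg] using this

lemma qp_split (a : ℂ) (m : ℕ) :
    qp q a = (∏ i ∈ range m, (1 - q ^ i * a)) * qp q (q ^ m * a) := by
  induction m with
  | zero => simp
  | succ m ih =>
    rw [ih, prod_range_succ, qp_step hq (q ^ m * a), pow_succ]
    ring_nf

lemma tendsto_prod_qp (a : ℂ) :
    Tendsto (fun m => ∏ i ∈ range m, (1 - q ^ i * a)) atTop (𝓝 (qp q a)) :=
  (multipliable_qp hq a).hasProd.tendsto_prod_nat

lemma tendsto_qpow_mul (a : ℂ) : Tendsto (fun m : ℕ => q ^ m * a) atTop (𝓝 0) := by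
  simpa using (tendsto_pow_atTop_nhds_zero_of_norm_lt_one hq).mul_const a

lemma tendsto_qp (a : ℂ) : Tendsto (fun m : ℕ => qp q (q ^ m * a)) atTop (𝓝 1) := by
  have key : ∀ c : ℂ, ‖c‖ < 1 → Tendsto (fun m : ℕ => qp q (q ^ m * c)) atTop (𝓝 1) := by
    intro c hc
    have hne : ∀ m : ℕ, q ^ m * c ≠ 1 := fun m h => by
      have h1 : ‖q ^ m * c‖ < 1 := by
        rw [norm_mul, norm_pow]
        exact (mul_le_of_le_one_left (norm_nonneg _)
          (pow_le_one₀ (norm_nonneg _) hq.le)).trans_lt hc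
      simp [h] at h1
    have h := (tendsto_const_nhds (x := qp q c)).div (tendsto_prod_qp hq c) (qp_ne_zero hq hne)
    rw [div_self (qp_ne_zero hq hne)] at h
    refine h.congr fun m => ?_
    change qp q c / ∏ i ∈ range m, (1 - q ^ i * c) = _
    rw [qp_split hq c m, mul_div_cancel_left₀]
    exact prod_ne_zero_iff.2 fun i _ => sub_ne_zero.2 (hne i).symm
  obtain ⟨M, hM⟩ := ((tendsto_qpow_mul hq a).norm.eventually_lt_const
    (show ‖(0 : ℂ)‖ < 1 by simp)).exists
  refine (tendsto_add_atTop_iff_nat M).1 ((key _ hM).congr fun m => ?_)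
  rw [pow_add, mul_assoc]

omit hq in
lemma qp_eq_zero {a : ℂ} (m : ℕ) (h : q ^ m * a = 1) : qp q a = 0 :=
  tprod_of_exists_eq_zero ⟨m, by simp [h]⟩

omit hq in
@[simp] lemma qp_zero : qp q 0 = 1 := by simp [qp]

end Pochhammer
/-! ### Weight, moments and the determinant form of the alternating sum -/

/-- The one-variable weight `∏ⱼ (q x / aⱼ)_∞ / (bⱼ x)_∞`. -/
noncomputable def daWeight {n : ℕ} (q : ℂ) (a b : Fin (n + 1) → ℂ) (x : ℂ) : ℂ :=
  ∏ j, qp q (q * (a j)⁻¹ * x) / qp q (b j * x)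

/-- The `r`-th moment `∑_{ν ≥ 0} x^{r+1} w(x)`, `x = aₖ q^ν`, i.e. the Jackson integral of
`x^r w(x)` over `[0, aₖ]` without the factor `1 - q`. -/
noncomputable def moment {n : ℕ} (q : ℂ) (a b : Fin (n + 1) → ℂ) (k : Fin (n + 1)) (r : ℕ) : ℂ :=
  ∑' ν : ℕ, (a k * q ^ ν) ^ (r + 1) * daWeight q a b (a k * q ^ ν)

/-- The bordered moment matrix: a column of ones followed by the moments of order `0, …, n - 1`. -/
noncomputable def borderedMatrix {n : ℕ} (q : ℂ) (a b : Fin (n + 1) → ℂ) :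
    Matrix (Fin (n + 1)) (Fin (n + 1)) ℂ :=
  Matrix.of fun k => Fin.cons 1 fun r : Fin n => moment q a b k r

/-- The square moment matrix, with the moments of order `0, …, n`. -/
noncomputable def momentMatrix {n : ℕ} (q : ℂ) (a b : Fin (n + 1) → ℂ) :
    Matrix (Fin (n + 1)) (Fin (n + 1)) ℂ :=
  Matrix.of fun k r => moment q a b k r

/-- No `aᵢ bⱼ` lies in `q^{-ℕ}`. -/
def Nondeg {n : ℕ} (q : ℂ) (a b : Fin (n + 1) → ℂ) : Prop :=
  ∀ i j, ∀ m : ℕ, q ^ m * (a i * b j) ≠ 1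

section Moments

variable {q : ℂ} (hq : ‖q‖ < 1) {n : ℕ} {a b : Fin (n + 1) → ℂ}

lemma Nondeg.qp_ne_zero (hq : ‖q‖ < 1) (h : Nondeg q a b) (k j : Fin (n + 1)) (ν : ℕ) :
    qp q (b j * (a k * q ^ ν)) ≠ 0 := by
  refine _root_.qp_ne_zero hq fun m hm => h k j (m + ν) ?_
  rw [← hm]
  ring

include hq in
lemma tendsto_daWeight (a b : Fin (n + 1) → ℂ) (k : Fin (n + 1)) :
    Tendsto (fun ν : ℕ => daWeight q a b (a k * q ^ ν)) atTop (𝓝 1) := by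
  have : Tendsto (fun ν : ℕ => daWeight q a b (a k * q ^ ν)) atTop
      (𝓝 (∏ j : Fin (n + 1), (1 : ℂ) / 1)) := by
    refine tendsto_finsetProd _ fun j _ => Tendsto.div ?_ ?_ one_ne_zero
    · refine (tendsto_qp hq (q * (a j)⁻¹ * a k)).congr fun ν => ?_
      ring_nf
    · refine (tendsto_qp hq (b j * a k)).congr fun ν => ?_
      ring_nf
  simpa using this

lemma exists_bound_of_tendsto {f : ℕ → ℂ} {c : ℂ} (h : Tendsto f atTop (𝓝 c)) :
    ∃ C : ℝ, ∀ m, ‖f m‖ ≤ C := by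
  obtain ⟨C, hC⟩ := h.norm.bddAbove_range
  exact ⟨C, fun m => hC ⟨m, rfl⟩⟩

include hq in
lemma summable_geometric_bound (c : ℂ) (r : ℕ) (C : ℝ) :
    Summable fun ν : ℕ => ‖(c * q ^ ν) ^ (r + 1)‖ * C := by
  have h1 : ‖q ^ (r + 1)‖ < 1 := by
    rw [norm_pow]
    exact pow_lt_one₀ (norm_nonneg _) hq (by omega)
  have h2 := (summable_geometric_of_lt_one (norm_nonneg _) h1).mul_left (‖c‖ ^ (r + 1) * C)
  refine h2.congr fun ν => ?_
  simp only [norm_mul, norm_pow]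
  ring

include hq in
lemma summable_norm_moment (a b : Fin (n + 1) → ℂ) (k : Fin (n + 1)) (r : ℕ) :
    Summable fun ν : ℕ => ‖(a k * q ^ ν) ^ (r + 1) * daWeight q a b (a k * q ^ ν)‖ := by
  obtain ⟨C, hC⟩ := exists_bound_of_tendsto (tendsto_daWeight hq a b k)
  refine Summable.of_nonneg_of_le (fun _ => norm_nonneg _) (fun ν => ?_)
    (summable_geometric_bound hq (a k) r C)
  rw [norm_mul]
  exact mul_le_mul_of_nonneg_left (hC ν) (norm_nonneg _)

include hq in
lemma summable_moment (a b : Fin (n + 1) → ℂ) (k : Fin (n + 1)) (r : ℕ) :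
    Summable fun ν : ℕ => (a k * q ^ ν) ^ (r + 1) * daWeight q a b (a k * q ^ ν) :=
  (summable_norm_moment hq a b k r).of_norm

/-- The weight vanishes at `aₖ q^ν` for `ν < 0`. -/
lemma daWeight_eq_zero (hq0 : q ≠ 0) {k : Fin (n + 1)} (hak : a k ≠ 0) {ν : ℤ} (hν : ν < 0) :
    daWeight q a b (a k * q ^ ν) = 0 := by
  refine prod_eq_zero (mem_univ k) ?_
  obtain ⟨m, hm⟩ : ∃ m : ℕ, ν = -((m : ℤ) + 1) := ⟨(-ν - 1).toNat, by omega⟩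
  rw [qp_eq_zero m, zero_div]
  rw [hm, zpow_neg, zpow_add₀ hq0]
  simp
  field_simp

lemma support_subset_range_natCast (hq0 : q ≠ 0) {k : Fin (n + 1)} (hak : a k ≠ 0) (r : ℕ) :
    Function.support (fun ν : ℤ => (a k * q ^ ν) ^ (r + 1) * daWeight q a b (a k * q ^ ν)) ⊆
      Set.range ((↑) : ℕ → ℤ) := by
  intro ν hν
  by_contra hcon
  refine hν ?_
  have : ν < 0 := by
    by_contra h
    exact hcon ⟨ν.toNat, by simpa using h⟩
  simp [daWeight_eq_zero hq0 hak this]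

lemma tsum_int_eq_moment (hq0 : q ≠ 0) {k : Fin (n + 1)} (hak : a k ≠ 0) (r : ℕ) :
    ∑' ν : ℤ, (a k * q ^ ν) ^ (r + 1) * daWeight q a b (a k * q ^ ν) = moment q a b k r := by
  rw [← Function.Injective.tsum_eq Nat.cast_injective
    (support_subset_range_natCast (b := b) hq0 hak r)]
  simp [moment]

include hq in
lemma summable_int_moment (hq0 : q ≠ 0) {k : Fin (n + 1)} (hak : a k ≠ 0) (r : ℕ) :
    Summable fun ν : ℤ => ‖(a k * q ^ ν) ^ (r + 1) * daWeight q a b (a k * q ^ ν)‖ := by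
  rw [← Function.Injective.summable_iff (g := ((↑) : ℕ → ℤ)) Nat.cast_injective]
  · refine (summable_norm_moment hq a b k r).congr fun ν => ?_
    simp
  · intro ν hν
    have := mt (@support_subset_range_natCast q n a b hq0 k hak r ν) hν
    rw [Function.notMem_support] at this
    simp only [this, norm_zero]

/-- Expanding the Vandermonde product turns the Jackson integral into a minor of moments. -/
lemma daSum_eq_det (hq : ‖q‖ < 1) (hq0 : q ≠ 0) (ha : ∀ i, a i ≠ 0) (e : Fin n → Fin (n + 1)) :
    daSum q a b (fun k => a (e k)) =
      (1 - q) ^ n * (Matrix.of fun i r : Fin n => moment q a b (e i) r).det := by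
  unfold daSum
  congr 1
  set f : Fin n → ℕ → ℤ → ℂ := fun i r ν =>
    (a (e i) * q ^ ν) ^ (r + 1) * daWeight q a b (a (e i) * q ^ ν) with hf
  have hterm : ∀ ν : Fin n → ℤ, daTerm q a b (fun k => a (e k)) ν =
      ∑ σ : Equiv.Perm (Fin n), (Equiv.Perm.sign σ : ℂ) * ∏ i, f i (σ i) (ν i) := by
    intro ν
    have h1 := Matrix.det_vandermonde fun i => a (e i) * q ^ ν i
    unfold daTerm
    rw [← h1, ← Matrix.det_mul_column, Matrix.det_transpose _ |>.symm, Matrix.det_apply']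
    refine sum_congr rfl fun σ _ => ?_
    congr 1
    refine prod_congr rfl fun i _ => ?_
    simp only [Matrix.transpose_apply, Matrix.of_apply, Matrix.vandermonde_apply, hf, daWeight]
    ring
  have hs : ∀ σ : Equiv.Perm (Fin n), Summable fun ν : Fin n → ℤ => ∏ i, f i (σ i) (ν i) :=
    fun σ => (summable_and_tsum_pi_prod n (fun i => f i (σ i))
      fun i => summable_int_moment hq hq0 (ha _) _).1.of_norm
  rw [tsum_congr hterm, Summable.tsum_finsetSum fun σ _ => (hs σ).mul_left _,
    ← Matrix.det_transpose, Matrix.det_apply']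
  refine sum_congr rfl fun σ _ => ?_
  rw [tsum_mul_left, (summable_and_tsum_pi_prod n (fun i => f i (σ i))
      fun i => summable_int_moment hq hq0 (ha _) _).2]
  congr 1
  refine prod_congr rfl fun i _ => ?_
  simpa [hf] using tsum_int_eq_moment hq0 (ha (e i)) (σ i : ℕ)

/-- Laplace expansion of the bordered determinant along its column of ones. -/
lemma alternating_sum_eq_det (hq : ‖q‖ < 1) (hq0 : q ≠ 0) (ha : ∀ i, a i ≠ 0) :
    (∑ i : Fin (n + 1), (-1 : ℂ) ^ (i : ℕ) * daSum q a b fun k => a (i.succAbove k)) =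
      (1 - q) ^ n * (borderedMatrix q a b).det := by
  rw [Matrix.det_succ_column_zero, mul_sum]
  refine sum_congr rfl fun i _ => ?_
  rw [daSum_eq_det hq hq0 ha i.succAbove]
  have : (borderedMatrix q a b).submatrix i.succAbove Fin.succ =
      Matrix.of fun k r : Fin n => moment q a b (i.succAbove k) r := by
    ext k r
    simp [borderedMatrix]
  rw [this]
  simp only [borderedMatrix, Matrix.of_apply, Fin.cons_zero]
  ring

end Moments
/-! ### The q-difference equation -/

section Recursion

variable {q : ℂ} {n : ℕ} {a b : Fin (n + 1) → ℂ}

/-- The polynomial `∏ⱼ (1 - X / aⱼ) - ∏ⱼ (1 - bⱼ X)`. -/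
noncomputable def diffPoly (a b : Fin (n + 1) → ℂ) : Polynomial ℂ :=
  ∏ j, (1 - Polynomial.C (a j)⁻¹ * Polynomial.X) - ∏ j, (1 - Polynomial.C (b j) * Polynomial.X)

lemma natDegree_linear_le (c : ℂ) :
    (1 - Polynomial.C c * Polynomial.X : Polynomial ℂ).natDegree ≤ 1 := by
  compute_degree

lemma natDegree_prod_linear_le (c : Fin (n + 1) → ℂ) :
    (∏ j, (1 - Polynomial.C (c j) * Polynomial.X : Polynomial ℂ)).natDegree ≤ n + 1 := by
  refine (Polynomial.natDegree_prod_le _ _).trans ?_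
  refine (sum_le_sum fun j _ => natDegree_linear_le (c j)).trans ?_
  simp

lemma coeff_prod_linear (c : Fin (n + 1) → ℂ) :
    (∏ j, (1 - Polynomial.C (c j) * Polynomial.X : Polynomial ℂ)).coeff (n + 1) =
      (-1) ^ (n + 1) * ∏ j, c j := by
  have h := Polynomial.coeff_prod_of_natDegree_le (s := univ)
    (fun j : Fin (n + 1) => (1 - Polynomial.C (c j) * Polynomial.X : Polynomial ℂ)) 1
    fun j _ => natDegree_linear_le (c j)
  simp only [card_univ, Fintype.card_fin, mul_one] at h
  rw [h]
  simp [Polynomial.coeff_one, prod_neg]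

lemma coeff_diffPoly :
    (diffPoly a b).coeff (n + 1) = (-1) ^ (n + 1) * ((∏ j, a j)⁻¹ - ∏ j, b j) := by
  rw [diffPoly, Polynomial.coeff_sub, coeff_prod_linear, coeff_prod_linear, prod_inv_distrib]
  ring

lemma sum_coeff_diffPoly (a b : Fin (n + 1) → ℂ) (x : ℂ) :
    ∑ r : Fin (n + 1), (diffPoly a b).coeff (r + 1) * x ^ ((r : ℕ) + 1) =
      ∏ j, (1 - (a j)⁻¹ * x) - ∏ j, (1 - b j * x) := by
  have hd : (diffPoly a b).natDegree < n + 2 :=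
    Nat.lt_succ_of_le <| (Polynomial.natDegree_sub_le _ _).trans
      (max_le (natDegree_prod_linear_le fun j => (a j)⁻¹) (natDegree_prod_linear_le b))
  have h0 : (diffPoly a b).coeff 0 = 0 := by
    simp [diffPoly, Polynomial.coeff_zero_prod]
  have h := Polynomial.eval_eq_sum_range' hd x
  rw [sum_range_succ', h0, zero_mul, add_zero] at h
  rw [Fin.sum_univ_eq_sum_range fun r : ℕ => (diffPoly a b).coeff (r + 1) * x ^ (r + 1), ← h]
  simp [diffPoly, Polynomial.eval_prod]

/-- The telescoping sum: `diffPoly · w` is the q-difference of `∏ⱼ (x / aⱼ)_∞ / (bⱼ x)_∞`, which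
vanishes at `x = aₖ` and tends to `1` at `x = 0`. -/
lemma sum_coeff_mul_moment (hq : ‖q‖ < 1) (ha : ∀ i, a i ≠ 0) (h : Nondeg q a b)
    (k : Fin (n + 1)) :
    ∑ r : Fin (n + 1), (diffPoly a b).coeff (r + 1) * moment q a b k r = -1 := by
  set φ : ℕ → ℂ := fun ν =>
    ∏ j, qp q ((a j)⁻¹ * (a k * q ^ ν)) / qp q (b j * (a k * q ^ ν)) with hφ
  have hstep : ∀ ν : ℕ, ∑ r : Fin (n + 1), (diffPoly a b).coeff (r + 1) *
      ((a k * q ^ ν) ^ ((r : ℕ) + 1) * daWeight q a b (a k * q ^ ν)) = φ ν - φ (ν + 1) := by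
    intro ν
    simp only [← mul_assoc]
    rw [← sum_mul, sum_coeff_diffPoly, sub_mul, daWeight, ← prod_mul_distrib,
      ← prod_mul_distrib]
    congr 1
    · refine prod_congr rfl fun j _ => ?_
      rw [qp_step hq ((a j)⁻¹ * (a k * q ^ ν))]
      ring_nf
    · refine prod_congr rfl fun j _ => ?_
      have h1 := qp_step hq (b j * (a k * q ^ ν))
      have h2 := h.qp_ne_zero hq k j ν
      have e1 : (a j)⁻¹ * (a k * q ^ (ν + 1)) = q * (a j)⁻¹ * (a k * q ^ ν) := by ring
      have e2 : b j * (a k * q ^ (ν + 1)) = q * (b j * (a k * q ^ ν)) := by ring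
      rw [e1, e2]
      rw [h1] at h2 ⊢
      rw [← mul_div_assoc, mul_div_mul_left _ _ (left_ne_zero_of_mul h2)]
  have hφ0 : φ 0 = 0 := by
    refine prod_eq_zero (mem_univ k) ?_
    rw [qp_eq_zero 0, zero_div]
    simp [ha k]
  have hφ1 : Tendsto φ atTop (𝓝 1) := by
    have : Tendsto φ atTop (𝓝 (∏ j : Fin (n + 1), (1 : ℂ) / 1)) := by
      refine tendsto_finsetProd _ fun j _ => Tendsto.div ?_ ?_ one_ne_zero
      · refine (tendsto_qp hq ((a j)⁻¹ * a k)).congr fun ν => ?_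
        ring_nf
      · refine (tendsto_qp hq (b j * a k)).congr fun ν => ?_
        ring_nf
    simpa using this
  have hs := hasSum_sum (s := univ) fun (r : Fin (n + 1)) _ =>
    ((summable_moment hq a b k r).hasSum.mul_left ((diffPoly a b).coeff (r + 1)))
  have ht := hs.tendsto_sum_nat
  simp only [hstep] at ht
  have ht' : Tendsto (fun N => ∑ i ∈ range N, (φ i - φ (i + 1))) atTop (𝓝 (0 - 1)) := by
    simp only [sum_range_sub', hφ0]
    exact tendsto_const_nhds.sub hφ1
  simpa [moment] using tendsto_nhds_unique ht ht'

/-- Coefficient matrix of the polynomials `∑ᵣ cᵣ Xʳ, 1 - βX, X - βX², …, X^{n-1} - βXⁿ`. -/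
def transMatrix (c : Fin (n + 1) → ℂ) (β : ℂ) : Matrix (Fin (n + 1)) (Fin (n + 1)) ℂ :=
  Matrix.of fun r => Fin.cons (c r) fun s : Fin n =>
    (if r = s.castSucc then 1 else 0) - (if r = s.succ then β else 0)

/-- Replacing the last row by the combination of rows with coefficients `β^{n-r}`, which kills
every column but the first, reduces the determinant to a triangular one. -/
lemma det_transMatrix (c : Fin (n + 1) → ℂ) (β : ℂ) :
    (transMatrix c β).det = (-1) ^ n * ∑ r : Fin (n + 1), c r * β ^ (n - (r : ℕ)) := by
  have h := Matrix.det_updateRow_sum (transMatrix c β) (Fin.last n) fun r => β ^ (n - (r : ℕ))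
  simp only [Fin.val_last, Nat.sub_self, pow_zero, one_smul] at h
  rw [← h, Matrix.det_succ_row _ (Fin.last n), Fin.sum_univ_succ]
  have hz : ∀ s : Fin n, (∑ r : Fin (n + 1), β ^ (n - (r : ℕ)) • transMatrix c β r) s.succ = 0 := by
    intro s
    simp only [Finset.sum_apply, Pi.smul_apply, smul_eq_mul, transMatrix, Matrix.of_apply,
      Fin.cons_succ, mul_sub, sum_sub_distrib, mul_ite, mul_one, mul_zero, sum_ite_eq',
      mem_univ, if_true, Fin.val_castSucc, Fin.val_succ]
    rw [← pow_succ, sub_eq_zero]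
    congr 1
    omega
  have hminor : ((Matrix.updateRow (transMatrix c β) (Fin.last n)
      (∑ r : Fin (n + 1), β ^ (n - (r : ℕ)) • transMatrix c β r)).submatrix
        (Fin.last n).succAbove (Fin.succAbove 0)).det = 1 := by
    rw [Matrix.det_of_isLowerTriangular]
    · refine prod_eq_one fun i _ => ?_
      have : i.castSucc ≠ i.succ := by
        simp [Fin.ext_iff]
      simp [Matrix.updateRow_apply, transMatrix, this, (Fin.castSucc_lt_last i).ne]
    · intro i s his
      have his' : i < s := his
      have h1 : i.castSucc ≠ s.succ := by
        simp only [ne_eq, Fin.ext_iff, Fin.val_castSucc, Fin.val_succ]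
        omega
      simp [Matrix.updateRow_apply, transMatrix, (Fin.castSucc_lt_last i).ne, h1, his'.ne]
  rw [hminor]
  simp only [Matrix.updateRow_self, hz, mul_zero, zero_mul, sum_const_zero, add_zero,
    Fin.val_last, Fin.val_zero, mul_one, Finset.sum_apply, Pi.smul_apply, smul_eq_mul]
  congr 1
  refine sum_congr rfl fun r _ => ?_
  simp [transMatrix, mul_comm]

lemma momentMatrix_mul_transMatrix (hq : ‖q‖ < 1) (ha : ∀ i, a i ≠ 0) (h : Nondeg q a b)
    (β : ℂ) (b' : Fin (n + 1) → ℂ)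
    (hb' : ∀ k r, moment q a b' k r = moment q a b k r - β * moment q a b k (r + 1)) :
    momentMatrix q a b * transMatrix (fun r => -(diffPoly a b).coeff (r + 1)) β =
      borderedMatrix q a b' := by
  ext k s
  rw [Matrix.mul_apply]
  refine Fin.cases ?_ (fun s => ?_) s
  · have := sum_coeff_mul_moment hq ha h k
    simp only [momentMatrix, transMatrix, borderedMatrix, Matrix.of_apply, Fin.cons_zero, mul_neg,
      sum_neg_distrib]
    rw [neg_eq_iff_eq_neg, ← this]
    exact sum_congr rfl fun r _ => mul_comm _ _
  · simp only [momentMatrix, transMatrix, borderedMatrix, Matrix.of_apply, Fin.cons_succ, mul_sub,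
      sum_sub_distrib, mul_ite, mul_one, mul_zero, sum_ite_eq', mem_univ, if_true,
      Fin.val_castSucc, Fin.val_succ, hb']
    ring

lemma det_bordered_eq (hq : ‖q‖ < 1) (ha : ∀ i, a i ≠ 0) (h : Nondeg q a b) :
    (∏ i, a i) * (borderedMatrix q a b).det =
      (momentMatrix q a b).det * (1 - (∏ i, a i) * ∏ i, b i) := by
  rw [← momentMatrix_mul_transMatrix hq ha h 0 b (by simp), Matrix.det_mul, det_transMatrix,
    Fin.sum_univ_castSucc, sum_eq_zero]
  · have hA : ∏ i, a i ≠ 0 := prod_ne_zero_iff.2 fun i _ => ha i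
    have hs : ((-1 : ℂ) ^ n) * (-1) ^ n = 1 := by
      rw [← mul_pow]
      simp
    simp only [Fin.val_last, coeff_diffPoly, Nat.sub_self, pow_zero, zero_add, mul_one, pow_succ]
    field_simp
    linear_combination (momentMatrix q a b).det * (1 - (∏ i, a i) * ∏ i, b i) * hs
  · intro i _
    rw [zero_pow, mul_zero]
    simp only [Fin.val_castSucc]
    omega

lemma moment_update_mul (hq : ‖q‖ < 1) (h : Nondeg q a b) (j : Fin (n + 1)) (k : Fin (n + 1))
    (r : ℕ) : moment q a (Function.update b j (q * b j)) k r =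
      moment q a b k r - b j * moment q a b k (r + 1) := by
  unfold moment
  rw [← tsum_mul_left, ← Summable.tsum_sub (summable_moment hq a b k r)
    ((summable_moment hq a b k (r + 1)).mul_left _)]
  refine tsum_congr fun ν => ?_
  have hw : daWeight q a (Function.update b j (q * b j)) (a k * q ^ ν) =
      (1 - b j * (a k * q ^ ν)) * daWeight q a b (a k * q ^ ν) := by
    unfold daWeight
    rw [← mul_prod_erase univ _ (mem_univ j),
      ← mul_prod_erase univ (fun i => qp q (q * (a i)⁻¹ * (a k * q ^ ν)) /
        qp q (b i * (a k * q ^ ν))) (mem_univ j), ← mul_assoc (1 - _)]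
    congr 1
    · have h1 := qp_step hq (b j * (a k * q ^ ν))
      have h2 := h.qp_ne_zero hq k j ν
      rw [Function.update_self, mul_assoc q (b j)]
      rw [h1] at h2 ⊢
      rw [← mul_div_assoc, mul_div_mul_left _ _ (left_ne_zero_of_mul h2)]
    · refine prod_congr rfl fun i hi => ?_
      rw [Function.update_of_ne (ne_of_mem_erase hi)]
  rw [hw]
  ring

lemma det_bordered_update_eq (hq : ‖q‖ < 1) (ha : ∀ i, a i ≠ 0) (h : Nondeg q a b)
    (j : Fin (n + 1)) (hj : b j ≠ 0) :
    (∏ i, a i) * (borderedMatrix q a (Function.update b j (q * b j))).det =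
      (momentMatrix q a b).det * ∏ i, (1 - a i * b j) := by
  rw [← momentMatrix_mul_transMatrix hq ha h (b j) _ (moment_update_mul hq h j), Matrix.det_mul,
    det_transMatrix]
  have h1 := sum_coeff_diffPoly a b (b j)⁻¹
  rw [prod_eq_zero (f := fun i => 1 - b i * (b j)⁻¹) (mem_univ j) (by simp [hj]), sub_zero] at h1
  have h2 : ∑ r : Fin (n + 1), -(diffPoly a b).coeff (r + 1) * b j ^ (n - (r : ℕ)) =
      -(b j ^ (n + 1) * ∏ i, (1 - (a i)⁻¹ * (b j)⁻¹)) := by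
    rw [← h1, mul_sum, ← sum_neg_distrib]
    refine sum_congr rfl fun r _ => ?_
    have e : b j ^ (n + 1) = b j ^ (n - (r : ℕ)) * b j ^ ((r : ℕ) + 1) := by
      rw [← pow_add]
      congr 1
      omega
    rw [e, inv_pow]
    field_simp
  have h3 : (∏ i, a i) * (b j ^ (n + 1) * ∏ i, (1 - (a i)⁻¹ * (b j)⁻¹)) =
      (-1) ^ (n + 1) * ∏ i, (1 - a i * b j) := by
    have e1 : b j ^ (n + 1) = ∏ _i : Fin (n + 1), b j := by simp
    have e2 : (-1 : ℂ) ^ (n + 1) = ∏ _i : Fin (n + 1), (-1) := by simp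
    rw [e1, e2, ← prod_mul_distrib, ← prod_mul_distrib, ← prod_mul_distrib]
    refine prod_congr rfl fun i _ => ?_
    have := ha i
    field_simp
    ring
  have hs : ((-1 : ℂ) ^ n) * (-1) ^ n = 1 := by
    rw [← mul_pow]
    simp
  rw [h2]
  rw [pow_succ (-1 : ℂ)] at h3
  linear_combination (-(momentMatrix q a b).det * (-1) ^ n) * h3 +
    (momentMatrix q a b).det * (∏ i, (1 - a i * b j)) * hs

/-- The q-difference equation in `bⱼ` satisfied by the bordered determinant. -/
lemma det_bordered_step (hq : ‖q‖ < 1) (ha : ∀ i, a i ≠ 0) (h : Nondeg q a b)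
    (j : Fin (n + 1)) (hj : b j ≠ 0) :
    (borderedMatrix q a b).det * ∏ i, (1 - a i * b j) =
      (1 - (∏ i, a i) * ∏ i, b i) *
        (borderedMatrix q a (Function.update b j (q * b j))).det := by
  have hA : ∏ i, a i ≠ 0 := prod_ne_zero_iff.2 fun i _ => ha i
  refine mul_left_cancel₀ hA ?_
  linear_combination (∏ i, (1 - a i * b j)) * det_bordered_eq hq ha h -
    (1 - (∏ i, a i) * ∏ i, b i) * det_bordered_update_eq hq ha h j hj

end Recursion
/-! ### Reduction to `b = 0` -/

section Limit

variable {q : ℂ} {n : ℕ} {a b : Fin (n + 1) → ℂ}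

lemma Nondeg.update (h : Nondeg q a b) (j : Fin (n + 1)) (c : ℂ)
    (hc : ∀ i, ∀ m : ℕ, q ^ m * (a i * c) ≠ 1) : Nondeg q a (Function.update b j c) := by
  intro i s m
  by_cases hs : s = j
  · subst hs
    simpa using hc i m
  · rw [Function.update_of_ne hs]
    exact h i s m

lemma Nondeg.update_pow (h : Nondeg q a b) (j : Fin (n + 1)) (N : ℕ) :
    Nondeg q a (Function.update b j (q ^ N * b j)) := by
  refine h.update j _ fun i m hm => h i j (m + N) ?_
  rw [← hm]
  ring

lemma det_bordered_iterate (hq : ‖q‖ < 1) (hq0 : q ≠ 0) (ha : ∀ i, a i ≠ 0) (h : Nondeg q a b)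
    (j : Fin (n + 1)) (hj : b j ≠ 0) (N : ℕ) :
    (borderedMatrix q a b).det * ∏ i, ∏ m ∈ range N, (1 - q ^ m * (a i * b j)) =
      (∏ m ∈ range N, (1 - q ^ m * ((∏ i, a i) * ∏ i, b i))) *
        (borderedMatrix q a (Function.update b j (q ^ N * b j))).det := by
  induction N with
  | zero => simp
  | succ N ih =>
    have hstep := det_bordered_step hq ha (h.update_pow j N) j
      (by simpa using ⟨fun h => absurd h hq0, hj⟩)
    simp only [Function.update_self, Function.update_idem, ← mul_assoc q, ← pow_succ'] at hstep
    have hprod : ∏ i, Function.update b j (q ^ N * b j) i = q ^ N * ∏ i, b i := by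
      rw [prod_update_of_mem (mem_univ j), mul_assoc, ← mul_prod_erase univ b (mem_univ j),
        sdiff_singleton_eq_erase]
    rw [hprod] at hstep
    have hl : ∏ i, (1 - a i * (q ^ N * b j)) = ∏ i, (1 - q ^ N * (a i * b j)) :=
      prod_congr rfl fun i _ => by ring
    rw [hl] at hstep
    simp only [prod_range_succ, prod_mul_distrib]
    linear_combination (∏ i, (1 - q ^ N * (a i * b j))) * ih +
      (∏ m ∈ range N, (1 - q ^ m * ((∏ i, a i) * ∏ i, b i))) * hstep

lemma daWeight_update (j : Fin (n + 1)) (c x : ℂ) :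
    daWeight q a (Function.update b j c) x =
      daWeight q a (Function.update b j 0) x * (qp q (c * x))⁻¹ := by
  unfold daWeight
  rw [← mul_prod_erase univ _ (mem_univ j),
    ← mul_prod_erase univ (fun i => qp q (q * (a i)⁻¹ * x) /
        qp q (Function.update b j 0 i * x)) (mem_univ j),
    mul_right_comm (_ / _)]
  congr 1
  · simp [div_eq_mul_inv]
  · refine prod_congr rfl fun i hi => ?_
    rw [Function.update_of_ne (ne_of_mem_erase hi), Function.update_of_ne (ne_of_mem_erase hi)]

lemma tendsto_moment_update (hq : ‖q‖ < 1) (a b : Fin (n + 1) → ℂ)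
    (j k : Fin (n + 1)) (r : ℕ) :
    Tendsto (fun N : ℕ => moment q a (Function.update b j (q ^ N * b j)) k r) atTop
      (𝓝 (moment q a (Function.update b j 0) k r)) := by
  obtain ⟨C, hC⟩ := exists_bound_of_tendsto (tendsto_daWeight hq a (Function.update b j 0) k)
  have hinv : Tendsto (fun m : ℕ => (qp q (q ^ m * (b j * a k)))⁻¹) atTop (𝓝 1) := by
    simpa using (tendsto_qp hq (b j * a k)).inv₀ one_ne_zero
  obtain ⟨D, hD⟩ := exists_bound_of_tendsto hinv
  have hpow : ∀ N ν : ℕ, q ^ N * b j * (a k * q ^ ν) = q ^ (N + ν) * (b j * a k) := by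
    intro N ν
    ring
  refine tendsto_tsum_of_dominated_convergence (summable_geometric_bound hq (a k) r (C * D))
    (fun ν => ?_) (Eventually.of_forall fun N ν => ?_)
  · refine Tendsto.const_mul _ ?_
    simp only [daWeight_update j (_ * _), hpow]
    have h1 := (hinv.comp (tendsto_add_atTop_nat ν)).const_mul
      (daWeight q a (Function.update b j 0) (a k * q ^ ν))
    rw [mul_one] at h1
    exact h1
  · rw [daWeight_update, hpow, norm_mul, norm_mul]
    exact mul_le_mul_of_nonneg_left (mul_le_mul (hC ν) (hD _) (norm_nonneg _)
      ((norm_nonneg _).trans (hC ν))) (norm_nonneg _)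

lemma tendsto_det_bordered_update (hq : ‖q‖ < 1) (a b : Fin (n + 1) → ℂ) (j : Fin (n + 1)) :
    Tendsto (fun N : ℕ => (borderedMatrix q a (Function.update b j (q ^ N * b j))).det) atTop
      (𝓝 (borderedMatrix q a (Function.update b j 0)).det) := by
  refine ((continuous_id.matrix_det).tendsto _).comp ?_
  refine tendsto_pi_nhds.2 fun k => tendsto_pi_nhds.2 fun s => ?_
  refine Fin.cases ?_ (fun s => ?_) s
  · simp
  · simpa [borderedMatrix] using tendsto_moment_update hq a b j k s

/-- Sending a single parameter `bⱼ` to zero along `q^N bⱼ`. -/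
lemma det_bordered_update_zero (hq : ‖q‖ < 1) (hq0 : q ≠ 0) (ha : ∀ i, a i ≠ 0)
    (h : Nondeg q a b) (j : Fin (n + 1)) :
    (borderedMatrix q a b).det * ∏ i, qp q (a i * b j) =
      qp q ((∏ i, a i) * ∏ i, b i) * (borderedMatrix q a (Function.update b j 0)).det := by
  by_cases hj : b j = 0
  · have h0 : ∏ i, b i = 0 := prod_eq_zero (mem_univ j) hj
    have hu : Function.update b j 0 = b := by
      rw [← hj]
      exact Function.update_eq_self j b
    simp [hj, h0, hu]
  · have h1 : Tendsto (fun N : ℕ => (borderedMatrix q a b).det *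
        ∏ i, ∏ m ∈ range N, (1 - q ^ m * (a i * b j))) atTop
        (𝓝 ((borderedMatrix q a b).det * ∏ i, qp q (a i * b j))) :=
      (tendsto_finsetProd _ fun i _ => tendsto_prod_qp hq (a i * b j)).const_mul _
    have h2 := (tendsto_prod_qp hq ((∏ i, a i) * ∏ i, b i)).mul
      (tendsto_det_bordered_update hq a b j)
    refine tendsto_nhds_unique h1 (h2.congr fun N => ?_)
    exact (det_bordered_iterate hq hq0 ha h j hj N).symm

/-- Sending all parameters `bⱼ`, `j ∈ S`, to zero. The factor `(∏ a ∏ b)_∞` arises only once,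
since after the first step the product of the parameters is zero. -/
lemma det_bordered_piecewise (hq : ‖q‖ < 1) (hq0 : q ≠ 0) (ha : ∀ i, a i ≠ 0)
    (h : Nondeg q a b) {S : Finset (Fin (n + 1))} (hS : S.Nonempty) :
    Nondeg q a (S.piecewise 0 b) ∧
    (borderedMatrix q a b).det * ∏ j ∈ S, ∏ i, qp q (a i * b j) =
      qp q ((∏ i, a i) * ∏ i, b i) * (borderedMatrix q a (S.piecewise 0 b)).det := by
  induction hS using Finset.Nonempty.cons_induction with
  | singleton j =>
    rw [piecewise_singleton]
    exact ⟨h.update j _ (by simp), by simpa using det_bordered_update_zero hq hq0 ha h j⟩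
  | cons j S hj hS ih =>
    obtain ⟨ih1, ih2⟩ := ih
    have hu : (cons j S hj).piecewise 0 b = Function.update (S.piecewise 0 b) j 0 := by
      rw [cons_eq_insert, piecewise_insert]
      rfl
    have hz : ∏ i, S.piecewise 0 b i = 0 := by
      obtain ⟨s, hs⟩ := hS
      exact prod_eq_zero (mem_univ s) (by simp [hs])
    have hstep := det_bordered_update_zero hq hq0 ha ih1 j
    rw [hz, mul_zero, qp_zero, one_mul, piecewise_eq_of_notMem _ _ _ hj] at hstep
    refine ⟨hu ▸ ih1.update j _ (by simp), ?_⟩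
    rw [hu, prod_cons, ← hstep]
    linear_combination (∏ i, qp q (a i * b j)) * ih2

lemma det_bordered_eq_zero_params (hq : ‖q‖ < 1) (hq0 : q ≠ 0) (ha : ∀ i, a i ≠ 0)
    (h : Nondeg q a b) :
    (borderedMatrix q a b).det * ∏ i, ∏ j, qp q (a i * b j) =
      qp q ((∏ i, a i) * ∏ i, b i) * (borderedMatrix q a 0).det := by
  rw [Finset.prod_comm]
  simpa using (det_bordered_piecewise hq hq0 ha h univ_nonempty).2

end Limit

/-! ### Evaluation at `bⱼ = q / aⱼ` -/

section Evaluation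

variable {q : ℂ} {n : ℕ} {a b : Fin (n + 1) → ℂ}

lemma nondeg_special (hq : ‖q‖ < 1) (ha : ∀ i, a i ≠ 0)
    (hgen : ∀ i j, i ≠ j → ∀ m : ℕ, a i ≠ a j * q ^ m) :
    Nondeg q a fun j => q * (a j)⁻¹ := by
  intro i j m hm
  have hm' : q ^ (m + 1) * a i = a j := by
    have := ha j
    field_simp at hm
    rw [← hm]
    ring
  by_cases hij : i = j
  · subst hij
    have h1 : q ^ (m + 1) = 1 := by
      have := ha i
      field_simp at hm'
      exact hm'
    have h2 : ‖q ^ (m + 1)‖ < 1 := by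
      rw [norm_pow]
      exact pow_lt_one₀ (norm_nonneg _) hq (by omega)
    simp [h1] at h2
  · refine hgen j i (Ne.symm hij) (m + 1) ?_
    rw [← hm']
    ring

/-- For `bⱼ = q / aⱼ` the weight is identically `1` and the moments are geometric series. -/
lemma moment_special (hq : ‖q‖ < 1) (h : Nondeg q a fun j => q * (a j)⁻¹)
    (k : Fin (n + 1)) (r : ℕ) :
    moment q a (fun j => q * (a j)⁻¹) k r = (1 - q ^ (r + 1))⁻¹ * a k ^ (r + 1) := by
  have hw : ∀ ν : ℕ, daWeight q a (fun j => q * (a j)⁻¹) (a k * q ^ ν) = 1 := fun ν =>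
    prod_eq_one fun j _ => div_self (h.qp_ne_zero hq k j ν)
  have hr : ‖q ^ (r + 1)‖ < 1 := by
    rw [norm_pow]
    exact pow_lt_one₀ (norm_nonneg _) hq (by omega)
  unfold moment
  simp only [hw, mul_one]
  rw [← tsum_geometric_of_norm_lt_one hr, ← tsum_mul_right]
  refine tsum_congr fun ν => ?_
  ring

lemma det_bordered_special (hq : ‖q‖ < 1) (h : Nondeg q a fun j => q * (a j)⁻¹) :
    (borderedMatrix q a fun j => q * (a j)⁻¹).det =
      (∏ r ∈ range n, (1 - q ^ (r + 1)))⁻¹ * ∏ i, ∏ j ∈ Ioi i, (a j - a i) := by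
  have e : (borderedMatrix q a fun j => q * (a j)⁻¹) = Matrix.of fun k s =>
      (Fin.cons 1 (fun r : Fin n => (1 - q ^ ((r : ℕ) + 1))⁻¹) : Fin (n + 1) → ℂ) s *
        Matrix.vandermonde a k s := by
    ext k s
    refine Fin.cases ?_ (fun s => ?_) s
    · simp [borderedMatrix, Matrix.vandermonde_apply]
    · simp [borderedMatrix, Matrix.vandermonde_apply, moment_special hq h]
  rw [e, Matrix.det_mul_row, Matrix.det_vandermonde, Fin.prod_univ_succ]
  simp only [Fin.cons_zero, Fin.cons_succ, one_mul]
  rw [prod_inv_distrib, Fin.prod_univ_eq_prod_range fun r : ℕ => 1 - q ^ (r + 1)]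

/-- Splitting a product over all ordered pairs into the diagonal and the two triangles. -/
lemma prod_prod_eq_diag_mul {N : ℕ} (f : Fin N → Fin N → ℂ) :
    ∏ i, ∏ j, f i j = (∏ i, f i i) * ∏ i, ∏ j ∈ Ioi i, f i j * f j i := by
  have h1 : ∏ i, ∏ j ∈ Ioi i, f j i = ∏ i, ∏ j ∈ Iio i, f i j := by
    refine prod_comm' fun x y => ?_
    simp
  have h2 : ∀ i, ∏ j, f i j = f i i * ((∏ j ∈ Ioi i, f i j) * ∏ j ∈ Iio i, f i j) := by
    intro i
    have hd : Disjoint (Ioi i) (Iio i) := by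
      rw [disjoint_left]
      intro x hx hx'
      exact absurd (mem_Ioi.1 hx) (mem_Iio.1 hx').not_gt
    have hu : univ.erase i = Ioi i ∪ Iio i := by
      ext x
      simp only [mem_erase, mem_univ, and_true, mem_union, mem_Ioi, mem_Iio]
      exact ne_comm.trans lt_or_lt_iff_ne.symm
    rw [← mul_prod_erase univ _ (mem_univ i), hu, prod_union hd]
  simp only [h2, prod_mul_distrib, h1]

lemma det_bordered_zero (hq : ‖q‖ < 1) (hq0 : q ≠ 0) (ha : ∀ i, a i ≠ 0)
    (hgen : ∀ i j, i ≠ j → ∀ m : ℕ, a i ≠ a j * q ^ m) :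
    (borderedMatrix q a 0).det = qp q q ^ n * ∏ i, ∏ j ∈ Ioi i, a j * th q (a i / a j) := by
  have hN := nondeg_special hq ha hgen
  have hpow : ∀ m : ℕ, q ^ (m + 1) ≠ 1 := fun m h1 => by
    have h2 : ‖q ^ (m + 1)‖ < 1 := by
      rw [norm_pow]
      exact pow_lt_one₀ (norm_nonneg _) hq (by omega)
    simp [h1] at h2
  have hmain := det_bordered_eq_zero_params hq hq0 ha hN
  have hA : (∏ i, a i) * ∏ i, q * (a i)⁻¹ = q ^ (n + 1) := by
    rw [← prod_mul_distrib]
    have : ∀ i, a i * (q * (a i)⁻¹) = q := fun i => by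
      have := ha i
      field_simp
    simp [this]
  rw [hA, det_bordered_special hq hN, prod_prod_eq_diag_mul] at hmain
  have hdiag : ∏ i, qp q (a i * (q * (a i)⁻¹)) = qp q q ^ (n + 1) := by
    have : ∀ i, a i * (q * (a i)⁻¹) = q := fun i => by
      have := ha i
      field_simp
    simp [this]
  have hsplit := qp_split hq q n
  simp only [← pow_succ] at hsplit
  have hq1 : qp q (q ^ (n + 1)) ≠ 0 := qp_ne_zero hq fun m => by
    rw [← pow_add]
    exact hpow (m + n)
  have hP : ∏ r ∈ range n, (1 - q ^ (r + 1)) ≠ 0 :=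
    prod_ne_zero_iff.2 fun r _ => sub_ne_zero.2 (hpow r).symm
  have hth : (∏ i, ∏ j ∈ Ioi i, (a j - a i)) * ∏ i, ∏ j ∈ Ioi i,
      qp q (a i * (q * (a j)⁻¹)) * qp q (a j * (q * (a i)⁻¹)) =
      ∏ i, ∏ j ∈ Ioi i, a j * th q (a i / a j) := by
    rw [← prod_mul_distrib]
    refine prod_congr rfl fun i _ => ?_
    rw [← prod_mul_distrib]
    refine prod_congr rfl fun j _ => ?_
    have e1 : q / (a i / a j) = a j * (q * (a i)⁻¹) := by
      rw [div_div_eq_mul_div]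
      ring
    have e2 : q * (a i / a j) = a i * (q * (a j)⁻¹) := by ring
    have e3 : a j * (1 - a i / a j) = a j - a i := by
      have := ha j
      field_simp
    rw [th, qp_step hq (a i / a j), e1, e2, ← e3]
    ring
  rw [hdiag] at hmain
  refine mul_left_cancel₀ hq1 ?_
  rw [← hmain, ← hth, pow_succ]
  generalize ∏ i, ∏ j ∈ Ioi i, qp q (a i * (q * (a j)⁻¹)) * qp q (a j * (q * (a i)⁻¹)) = T
  nth_rewrite 2 [hsplit]
  field_simp

/-- If `aᵢ = aⱼ q^m` with `i ≠ j`, then rows `i` and `j` of the bordered matrix agree: the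
weight vanishes at the `m` points in which the two q-progressions differ. -/
lemma det_bordered_degenerate (hq : ‖q‖ < 1) (hq0 : q ≠ 0) (ha : ∀ i, a i ≠ 0)
    {i j : Fin (n + 1)} (hij : i ≠ j) {m : ℕ} (h : a i = a j * q ^ m) :
    (borderedMatrix q a b).det = 0 := by
  refine Matrix.det_zero_of_row_eq hij ?_
  ext s
  refine Fin.cases (by simp [borderedMatrix]) (fun s => ?_) s
  simp only [borderedMatrix, Matrix.of_apply, Fin.cons_succ]
  unfold moment
  rw [← (summable_moment hq a b j s).sum_add_tsum_nat_add m, sum_eq_zero, zero_add]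
  · refine tsum_congr fun ν => ?_
    have : a i * q ^ ν = a j * q ^ (ν + m) := by
      rw [h]
      ring
    rw [this]
  · intro ν hν
    have hlt : (ν : ℤ) - m < 0 := by
      have := mem_range.1 hν
      omega
    have h0 := daWeight_eq_zero (b := b) hq0 (ha i) hlt
    have e : a i * q ^ ((ν : ℤ) - m) = a j * q ^ ν := by
      rw [h, zpow_sub₀ hq0]
      simp only [zpow_natCast]
      field_simp
    rw [← e, h0, mul_zero]

lemma th_qpow (hq0 : q ≠ 0) (m : ℕ) : th q (q ^ m) = 0 := by
  cases m with
  | zero => simp [th, qp_eq_zero (q := q) (a := 1) 0]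
  | succ m =>
    rw [th, qp_eq_zero (a := q / q ^ (m + 1)) m, mul_zero]
    rw [pow_succ]
    field_simp

lemma th_qpow_inv (hq0 : q ≠ 0) (m : ℕ) : th q (q ^ m)⁻¹ = 0 := by
  rw [th, qp_eq_zero m, zero_mul]
  field_simp

lemma prod_th_degenerate (hq0 : q ≠ 0) (ha : ∀ i, a i ≠ 0)
    {i j : Fin (n + 1)} (hij : i ≠ j) {m : ℕ} (h : a i = a j * q ^ m) :
    ∏ i, ∏ j ∈ Ioi i, a j * th q (a i / a j) = 0 := by
  have hj := ha j
  rcases hij.lt_or_gt with hlt | hlt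
  · refine prod_eq_zero (mem_univ i) (prod_eq_zero (mem_Ioi.2 hlt) ?_)
    rw [h, mul_div_cancel_left₀ _ hj, th_qpow hq0, mul_zero]
  · refine prod_eq_zero (mem_univ j) (prod_eq_zero (mem_Ioi.2 hlt) ?_)
    have : a j / (a j * q ^ m) = (q ^ m)⁻¹ := by field_simp
    rw [h, this, th_qpow_inv hq0, mul_zero]

end Evaluation

/-- Evans's q-Dixon–Anderson summation. -/
theorem evans_q_dixon_anderson
    (q : ℝ) (hq0 : 0 < q) (hq1 : q < 1) (n : ℕ) (hn : 1 ≤ n)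
    (a b : Fin (n + 1) → ℂ) (ha : ∀ i, a i ≠ 0) (hb : ∀ i, b i ≠ 0)
    (hbal : (q : ℝ) < ‖(∏ i, a i) * ∏ i, b i‖)
    (hab : ∀ i j, ∀ m : ℕ, a i * b j ≠ ((q : ℂ) ^ m)⁻¹) :
    (∑ i : Fin (n + 1), (-1 : ℂ) ^ (i : ℕ) * daSum (q : ℂ) a b fun k => a (i.succAbove k)) =
      (1 - (q : ℂ)) ^ n * qp (q : ℂ) (q : ℂ) ^ n *
          qp (q : ℂ) ((∏ i, a i) * ∏ i, b i) /
          (∏ i, ∏ j, qp (q : ℂ) (a i * b j)) *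
        ∏ i, ∏ j ∈ Finset.Ioi i, a j * th (q : ℂ) (a i / a j) := by
  have hq : ‖(q : ℂ)‖ < 1 := by
    rw [Complex.norm_real, Real.norm_of_nonneg hq0.le]
    exact hq1
  have hqne : (q : ℂ) ≠ 0 := by exact_mod_cast hq0.ne'
  have hN : Nondeg (q : ℂ) a b := fun i j m hm =>
    hab i j m (eq_inv_of_mul_eq_one_right hm)
  rw [alternating_sum_eq_det hq hqne ha]
  by_cases hgen : ∀ i j, i ≠ j → ∀ m : ℕ, a i ≠ a j * (q : ℂ) ^ m
  · have hmain := det_bordered_eq_zero_params hq hqne ha hN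
    rw [det_bordered_zero hq hqne ha hgen] at hmain
    have hD : ∏ i, ∏ j, qp (q : ℂ) (a i * b j) ≠ 0 :=
      prod_ne_zero_iff.2 fun i _ => prod_ne_zero_iff.2 fun j _ => qp_ne_zero hq (hN i j)
    rw [eq_div_of_mul_eq hD hmain]
    ring
  · push Not at hgen
    obtain ⟨i, j, hij, m, hm⟩ := hgen
    rw [det_bordered_degenerate hq hqne ha hij hm, prod_th_degenerate hqne ha hij hm]
    simp
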